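/- For all x₁, x₂ ∈ (0,1] and ρ₁, ρ₂ ∈ (0,1) with ρ₁ + ρ₂ < 1, the correlation function satisfies Ψ(x₁,x₂;ρ₁,ρ₂) ≤ binom(ρ₁(1/x₁−1) + ρ₂(1/x₂−1), ρ₁(1/x₁−1))⁻¹, where binom denotes the generalized binomial coefficient. -/

import Mathlib

open MeasureTheory Real

noncomputable def betaFn (a b : ℝ) : ℝ := Real.Gamma a * Real.Gamma b / Real.Gamma (a + b)

noncomputable def incBeta (z a b : ℝ) : ℝ := ∫ t in (0:ℝ)..z, t ^ (a - 1) * (1 - t) ^ (b - 1)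

noncomputable def regIncBeta (z a b : ℝ) : ℝ := incBeta z a b / betaFn a b

noncomputable def mvBeta (ρ₁ ρ₂ ρ₀ : ℝ) : ℝ :=
  Real.Gamma ρ₁ * Real.Gamma ρ₂ * Real.Gamma ρ₀ / Real.Gamma (ρ₁ + ρ₂ + ρ₀)

noncomputable def genBinom (x y : ℝ) : ℝ :=
  Real.Gamma (x + 1) / (Real.Gamma (y + 1) * Real.Gamma (x - y + 1))

noncomputable def Psi (x₁ x₂ ρ₁ ρ₂ : ℝ) : ℝ :=
  (x₁ * x₂)⁻¹ * (mvBeta ρ₁ ρ₂ (1 - ρ₁ - ρ₂))⁻¹ *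
    ∫ p in {p : ℝ × ℝ | 0 ≤ p.1 ∧ 0 ≤ p.2 ∧ p.1 + p.2 ≤ 1},
      regIncBeta p.1 ρ₁ (1 - ρ₁) ^ (1 / x₁ - 1) *
        regIncBeta p.2 ρ₂ (1 - ρ₂) ^ (1 / x₂ - 1) *
        p.1 ^ (ρ₁ - 1) * p.2 ^ (ρ₂ - 1) * (1 - p.1 - p.2) ^ (-ρ₁ - ρ₂)

/-!
Under the Dirichlet law with parameters `(ρ₁, ρ₂, 1 - ρ₁ - ρ₂)` each coordinate has a Beta law, and
conditionally on one coordinate `t` the other is `1 - t` times an independent Beta variable. Hence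
the conditional mean of an increasing function of the second coordinate decreases in `t`. On the
other hand `I(t; ρ, 1 - ρ) / t ^ ρ` increases in `t`. By Chebyshev's integral inequality, replacing
`I(t; ρ₁, 1 - ρ₁) ^ m` by `t ^ (ρ₁ m)`, rescaled to have the same mean, therefore increases the
correlation. Doing this in both coordinates leaves a Dirichlet moment, whose value is a quotient of
Gamma functions.
-/

open Set

/-- The unnormalized density of the Beta distribution, i.e. the integrand of `incBeta`. -/
noncomputable def betaKernel (a b t : ℝ) : ℝ := t ^ (a - 1) * (1 - t) ^ (b - 1)

section betaKernel

variable {a b : ℝ}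

lemma betaKernel_nonneg {t : ℝ} (ht : t ∈ Icc (0 : ℝ) 1) : 0 ≤ betaKernel a b t :=
  mul_nonneg (rpow_nonneg ht.1 _) (rpow_nonneg (sub_nonneg.2 ht.2) _)

lemma continuousOn_betaKernel (a b : ℝ) : ContinuousOn (betaKernel a b) (Ioo 0 1) :=
  (continuousOn_id.rpow_const fun _ ht ↦ Or.inl ht.1.ne').mul
    ((continuousOn_const.sub continuousOn_id).rpow_const
      fun _ ht ↦ Or.inl (sub_pos.2 ht.2).ne')

lemma rpow_mul_betaKernel (α : ℝ) {t : ℝ} (ht : 0 < t) :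
    t ^ α * betaKernel a b t = betaKernel (a + α) b t := by
  rw [betaKernel, betaKernel, ← mul_assoc, ← rpow_add ht]
  ring_nf

lemma one_sub_rpow_mul_betaKernel (β : ℝ) {t : ℝ} (ht : t < 1) :
    (1 - t) ^ β * betaKernel a b t = betaKernel a (b + β) t := by
  rw [betaKernel, betaKernel, mul_left_comm, ← rpow_add (sub_pos.2 ht)]
  ring_nf

lemma ofReal_betaKernel {t : ℝ} (ht : t ∈ Icc (0 : ℝ) 1) :
    ((betaKernel a b t : ℝ) : ℂ) = (t : ℂ) ^ ((a : ℂ) - 1) * (1 - (t : ℂ)) ^ ((b : ℂ) - 1) := by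
  rw [betaKernel, Complex.ofReal_mul, Complex.ofReal_cpow ht.1,
    Complex.ofReal_cpow (sub_nonneg.2 ht.2)]
  push_cast
  rfl

lemma betaFn_pos (ha : 0 < a) (hb : 0 < b) : 0 < betaFn a b :=
  ProbabilityTheory.beta_pos ha hb

lemma intervalIntegrable_betaKernel (ha : 0 < a) (hb : 0 < b) :
    IntervalIntegrable (betaKernel a b) volume 0 1 := by
  have hℂ := Complex.betaIntegral_convergent (u := a) (v := b) (by simpa) (by simpa)
  rw [intervalIntegrable_iff_integrableOn_Icc_of_le zero_le_one] at hℂ ⊢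
  exact (hℂ.congr_fun (fun _ ht ↦ (ofReal_betaKernel ht).symm) measurableSet_Icc).re

lemma intervalIntegrable_betaKernel_of_mem_Icc (ha : 0 < a) (hb : 0 < b) {x y : ℝ}
    (hx : x ∈ Icc (0 : ℝ) 1) (hy : y ∈ Icc (0 : ℝ) 1) :
    IntervalIntegrable (betaKernel a b) volume x y :=
  (intervalIntegrable_betaKernel ha hb).mono_set
    (uIcc_of_le (zero_le_one' ℝ) ▸ uIcc_subset_Icc hx hy)

lemma intervalIntegrable_mul_betaKernel (ha : 0 < a) (hb : 0 < b) {f : ℝ → ℝ}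
    (hf : ContinuousOn f (Icc 0 1)) :
    IntervalIntegrable (fun t ↦ f t * betaKernel a b t) volume 0 1 :=
  (intervalIntegrable_betaKernel ha hb).continuousOn_mul (by rwa [uIcc_of_le zero_le_one])

lemma integral_betaKernel (ha : 0 < a) (hb : 0 < b) :
    ∫ t in (0 : ℝ)..1, betaKernel a b t = betaFn a b := by
  have hℂ : Complex.betaIntegral a b = ((∫ t in (0 : ℝ)..1, betaKernel a b t : ℝ) : ℂ) := by
    rw [Complex.betaIntegral, ← intervalIntegral.integral_ofReal]
    refine intervalIntegral.integral_congr fun t ht ↦ (ofReal_betaKernel ?_).symm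
    rwa [uIcc_of_le zero_le_one] at ht
  have hre := ProbabilityTheory.beta_eq_betaIntegralReal a b ha hb
  rw [hℂ, Complex.ofReal_re] at hre
  exact hre.symm

lemma integral_rpow_mul_betaKernel {α : ℝ} (ha : 0 < a + α) (hb : 0 < b) :
    ∫ t in (0 : ℝ)..1, t ^ α * betaKernel a b t = betaFn (a + α) b := by
  rw [← integral_betaKernel ha hb]
  exact intervalIntegral.integral_congr_Ioo_of_le zero_le_one
    fun t ht ↦ rpow_mul_betaKernel α ht.1

lemma betaKernel_mul_le (hb : b ≤ 1) {r t : ℝ} (hr₀ : 0 ≤ r) (hr₁ : r ≤ 1)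
    (ht : t ∈ Ico (0 : ℝ) 1) : betaKernel a b (r * t) ≤ r ^ (a - 1) * betaKernel a b t := by
  rw [betaKernel, betaKernel, mul_rpow hr₀ ht.1, ← mul_assoc]
  have h_anti : (1 - r * t) ^ (b - 1) ≤ (1 - t) ^ (b - 1) :=
    rpow_le_rpow_of_nonpos (sub_pos.2 ht.2)
      (sub_le_sub_left (mul_le_of_le_one_left ht.1 hr₁) 1) (sub_nonpos.2 hb)
  exact mul_le_mul_of_nonneg_left h_anti (mul_nonneg (rpow_nonneg hr₀ _) (rpow_nonneg ht.1 _))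

end betaKernel

section regIncBeta

variable {a b : ℝ}

lemma monotoneOn_incBeta (ha : 0 < a) (hb : 0 < b) :
    MonotoneOn (fun z ↦ incBeta z a b) (Icc 0 1) := by
  intro x hx y hy hxy
  have h_int {z : ℝ} (hz : z ∈ Icc (0 : ℝ) 1) : IntervalIntegrable (betaKernel a b) volume 0 z :=
    intervalIntegrable_betaKernel_of_mem_Icc ha hb unitInterval.zero_mem hz
  have h_diff : incBeta y a b - incBeta x a b = ∫ t in x..y, betaKernel a b t :=
    intervalIntegral.integral_interval_sub_left (h_int hy) (h_int hx)
  rw [← sub_nonneg, h_diff]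
  exact intervalIntegral.integral_nonneg hxy
    fun t ht ↦ betaKernel_nonneg ⟨hx.1.trans ht.1, ht.2.trans hy.2⟩

lemma hasDerivAt_incBeta (ha : 0 < a) (hb : 0 < b) {x : ℝ} (hx : x ∈ Ioo (0 : ℝ) 1) :
    HasDerivAt (fun z ↦ incBeta z a b) (betaKernel a b x) x :=
  intervalIntegral.integral_hasDerivAt_right
    (intervalIntegrable_betaKernel_of_mem_Icc ha hb unitInterval.zero_mem
      (Ioo_subset_Icc_self hx))
    ((continuousOn_betaKernel a b).stronglyMeasurableAtFilter isOpen_Ioo x hx)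
    ((continuousOn_betaKernel a b).continuousAt (isOpen_Ioo.mem_nhds hx))

lemma incBeta_mul_le (ha : 0 < a) (hb : 0 < b) (hb₁ : b ≤ 1) {r y : ℝ} (hr₀ : 0 < r)
    (hr₁ : r ≤ 1) (hy : y ∈ Icc (0 : ℝ) 1) : incBeta (r * y) a b ≤ r ^ a * incBeta y a b := by
  have hry : r * y ∈ Icc (0 : ℝ) 1 := unitInterval.mul_mem ⟨hr₀.le, hr₁⟩ hy
  have h_int {z : ℝ} (hz : z ∈ Icc (0 : ℝ) 1) : IntervalIntegrable (betaKernel a b) volume 0 z :=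
    intervalIntegrable_betaKernel_of_mem_Icc ha hb unitInterval.zero_mem hz
  have h_int_dilate : IntervalIntegrable (fun t ↦ betaKernel a b (r * t)) volume 0 y := by
    simpa only [zero_div, mul_div_cancel_left₀ y hr₀.ne'] using (h_int hry).comp_mul_left (c := r)
  calc incBeta (r * y) a b
      = r * ∫ t in (0 : ℝ)..y, betaKernel a b (r * t) := by
        rw [intervalIntegral.mul_integral_comp_mul_left, mul_zero]
        rfl
    _ ≤ r * ∫ t in (0 : ℝ)..y, r ^ (a - 1) * betaKernel a b t := by
        refine mul_le_mul_of_nonneg_left ?_ hr₀.le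
        refine intervalIntegral.integral_mono_on_of_le_Ioo hy.1 h_int_dilate
          ((h_int hy).const_mul _) fun t ht ↦ ?_
        exact betaKernel_mul_le hb₁ hr₀.le hr₁ ⟨ht.1.le, ht.2.trans_le hy.2⟩
    _ = r ^ a * incBeta y a b := by
        rw [intervalIntegral.integral_const_mul, ← mul_assoc, rpow_sub_one hr₀.ne',
          mul_div_cancel₀ _ hr₀.ne']
        rfl

lemma regIncBeta_zero (a b : ℝ) : regIncBeta 0 a b = 0 := by
  rw [regIncBeta, incBeta, intervalIntegral.integral_same, zero_div]

lemma regIncBeta_one (ha : 0 < a) (hb : 0 < b) : regIncBeta 1 a b = 1 := by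
  rw [regIncBeta, show incBeta 1 a b = betaFn a b from integral_betaKernel ha hb,
    div_self (betaFn_pos ha hb).ne']

lemma monotoneOn_regIncBeta (ha : 0 < a) (hb : 0 < b) :
    MonotoneOn (fun z ↦ regIncBeta z a b) (Icc 0 1) := fun _ hx _ hy hxy ↦
  div_le_div_of_nonneg_right (monotoneOn_incBeta ha hb hx hy hxy) (betaFn_pos ha hb).le

lemma regIncBeta_nonneg (ha : 0 < a) (hb : 0 < b) {x : ℝ} (hx : x ∈ Icc (0 : ℝ) 1) :
    0 ≤ regIncBeta x a b :=
  regIncBeta_zero a b ▸ monotoneOn_regIncBeta ha hb unitInterval.zero_mem hx hx.1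

lemma continuousOn_regIncBeta (ha : 0 < a) (hb : 0 < b) :
    ContinuousOn (fun z ↦ regIncBeta z a b) (Icc 0 1) := by
  have h := intervalIntegral.continuousOn_primitive_interval'
    (intervalIntegrable_betaKernel ha hb) left_mem_uIcc
  rw [uIcc_of_le zero_le_one] at h
  exact h.div_const _

lemma continuousOn_regIncBeta_rpow (ha : 0 < a) (hb : 0 < b) {m : ℝ} (hm : 0 ≤ m) :
    ContinuousOn (fun z ↦ regIncBeta z a b ^ m) (Icc 0 1) :=
  (continuousOn_regIncBeta ha hb).rpow_const fun _ _ ↦ Or.inr hm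

lemma monotoneOn_regIncBeta_rpow (ha : 0 < a) (hb : 0 < b) {m : ℝ} (hm : 0 ≤ m) :
    MonotoneOn (fun z ↦ regIncBeta z a b ^ m) (Icc 0 1) := fun _ hx _ hy hxy ↦
  rpow_le_rpow (regIncBeta_nonneg ha hb hx) (monotoneOn_regIncBeta ha hb hx hy hxy) hm

lemma integral_regIncBeta_rpow_mul_betaKernel (ha : 0 < a) (hb : 0 < b) {m : ℝ} (hm : 0 ≤ m) :
    ∫ t in (0 : ℝ)..1, regIncBeta t a b ^ m * betaKernel a b t = betaFn a b / (m + 1) := by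
  have hm₁ : 0 < m + 1 := by positivity
  have h_cont : ContinuousOn (fun z ↦ betaFn a b / (m + 1) * regIncBeta z a b ^ (m + 1))
      (Icc 0 1) :=
    continuousOn_const.mul (continuousOn_regIncBeta_rpow ha hb hm₁.le)
  have h_deriv {x : ℝ} (hx : x ∈ Ioo (0 : ℝ) 1) :
      HasDerivAt (fun z ↦ betaFn a b / (m + 1) * regIncBeta z a b ^ (m + 1))
        (regIncBeta x a b ^ m * betaKernel a b x) x := by
    have hB := (betaFn_pos ha hb).ne'
    have h_reg : HasDerivAt (fun z ↦ regIncBeta z a b) (betaKernel a b x / betaFn a b) x :=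
      (hasDerivAt_incBeta ha hb hx).div_const _
    convert! (h_reg.rpow_const (p := m + 1) (Or.inr (by linarith))).const_mul
      (betaFn a b / (m + 1)) using 1
    rw [add_sub_cancel_right]
    field_simp
  rw [intervalIntegral.integral_eq_sub_of_hasDerivAt_of_le zero_le_one h_cont (fun _ ↦ h_deriv)
    (intervalIntegrable_mul_betaKernel ha hb (continuousOn_regIncBeta_rpow ha hb hm)),
    regIncBeta_one ha hb, regIncBeta_zero, zero_rpow hm₁.ne', one_rpow, mul_one, mul_zero,
    sub_zero]

lemma regIncBeta_rpow_mul_rpow_le (ha : 0 < a) (hb : 0 < b) (hb₁ : b ≤ 1) {m x y : ℝ}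
    (hm : 0 ≤ m) (hx : 0 < x) (hxy : x ≤ y) (hy : y ≤ 1) :
    regIncBeta x a b ^ m * y ^ (a * m) ≤ regIncBeta y a b ^ m * x ^ (a * m) := by
  have hy₀ : 0 < y := hx.trans_le hxy
  have hIx := regIncBeta_nonneg ha hb ⟨hx.le, hxy.trans hy⟩
  have hIy := regIncBeta_nonneg ha hb ⟨hy₀.le, hy⟩
  have h_scale : regIncBeta x a b ≤ (x / y) ^ a * regIncBeta y a b := by
    have h := incBeta_mul_le ha hb hb₁ (div_pos hx hy₀) (div_le_one_of_le₀ hxy hy₀.le)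
      ⟨hy₀.le, hy⟩
    rw [div_mul_cancel₀ x hy₀.ne'] at h
    rw [regIncBeta, regIncBeta, ← mul_div_assoc]
    exact div_le_div_of_nonneg_right h (betaFn_pos ha hb).le
  have h_base : regIncBeta x a b * y ^ a ≤ regIncBeta y a b * x ^ a := by
    rw [div_rpow hx.le hy₀.le, div_mul_eq_mul_div, le_div_iff₀ (rpow_pos_of_pos hy₀ a)] at h_scale
    rwa [mul_comm (regIncBeta y a b)]
  rw [rpow_mul hx.le, rpow_mul hy₀.le, ← mul_rpow hIx (rpow_nonneg hy₀.le a),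
    ← mul_rpow hIy (rpow_nonneg hx.le a)]
  exact rpow_le_rpow (mul_nonneg hIx (rpow_nonneg hy₀.le a)) h_base hm

end regIncBeta

theorem setIntegral_mul_mul_setIntegral_le_of_antitoneOn {X : Type*} [MeasurableSpace X]
    [LinearOrder X] {μ : Measure X} [SFinite μ] {s : Set X} {f g φ : X → ℝ}
    (hs : MeasurableSet s) (hf : IntegrableOn f s μ) (hg : IntegrableOn g s μ)
    (hfφ : IntegrableOn (fun x ↦ f x * φ x) s μ) (hgφ : IntegrableOn (fun x ↦ g x * φ x) s μ)
    (h_ratio : ∀ x ∈ s, ∀ y ∈ s, x ≤ y → f x * g y ≤ f y * g x) (hφ : AntitoneOn φ s) :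
    (∫ x in s, f x * φ x ∂μ) * (∫ x in s, g x ∂μ) ≤
      (∫ x in s, f x ∂μ) * ∫ x in s, g x * φ x ∂μ := by
  -- Chebyshev's argument: integrate a symmetrized pointwise inequality over `s ×ˢ s`.
  have h_pair {x y : X} (hx : x ∈ s) (hy : y ∈ s) :
      f x * φ x * g y + g x * (f y * φ y) ≤ f x * (g y * φ y) + g x * φ x * f y := by
    rcases le_total x y with hxy | hyx
    · linarith [mul_nonneg (sub_nonneg.2 (h_ratio x hx y hy hxy))
        (sub_nonneg.2 (hφ hx hy hxy))]
    · linarith [mul_nonneg (sub_nonneg.2 (h_ratio y hy x hx hyx))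
        (sub_nonneg.2 (hφ hy hx hyx))]
  have h_mono := integral_mono_ae ((hfφ.mul_prod hg).add (hg.mul_prod hfφ))
    ((hf.mul_prod hgφ).add (hgφ.mul_prod hf)) (by
      rw [Measure.prod_restrict]
      exact ae_restrict_of_forall_mem (hs.prod hs) fun p hp ↦ h_pair hp.1 hp.2)
  rw [integral_add' (hfφ.mul_prod hg) (hg.mul_prod hfφ),
    integral_add' (hf.mul_prod hgφ) (hgφ.mul_prod hf),
    integral_prod_mul (fun x ↦ f x * φ x) g, integral_prod_mul g fun x ↦ f x * φ x,
    integral_prod_mul f fun x ↦ g x * φ x, integral_prod_mul (fun x ↦ g x * φ x) f] at h_mono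
  linarith

/-- The Erdélyi–Kober fractional integral of `g` at `u`, up to the factor `1 / Γ(c)`. -/
noncomputable def erdelyiKober (b c : ℝ) (g : ℝ → ℝ) (u : ℝ) : ℝ :=
  ∫ s in (0 : ℝ)..1, g (u * s) * betaKernel b c s

section erdelyiKober

variable {b c : ℝ} {g : ℝ → ℝ}

lemma monotoneOn_erdelyiKober (hb : 0 < b) (hc : 0 < c) (hg : ContinuousOn g (Icc 0 1))
    (hg_mono : MonotoneOn g (Icc 0 1)) : MonotoneOn (erdelyiKober b c g) (Icc 0 1) := by
  intro u hu v hv huv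
  have h_int {w : ℝ} (hw : w ∈ Icc (0 : ℝ) 1) :
      IntervalIntegrable (fun s ↦ g (w * s) * betaKernel b c s) volume 0 1 :=
    intervalIntegrable_mul_betaKernel hb hc <|
      hg.comp (by fun_prop) fun _ ↦ unitInterval.mul_mem hw
  refine intervalIntegral.integral_mono_on zero_le_one (h_int hu) (h_int hv) fun s hs ↦ ?_
  exact mul_le_mul_of_nonneg_right
    (hg_mono (unitInterval.mul_mem hu hs) (unitInterval.mul_mem hv hs)
      (mul_le_mul_of_nonneg_right huv hs.1))
    (betaKernel_nonneg hs)

lemma erdelyiKober_rpow {β u : ℝ} (hb : 0 < b + β) (hc : 0 < c) (hu : 0 ≤ u) :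
    erdelyiKober b c (fun s ↦ s ^ β) u = u ^ β * betaFn (b + β) c := by
  rw [erdelyiKober, ← integral_rpow_mul_betaKernel hb hc, ← intervalIntegral.integral_const_mul]
  refine intervalIntegral.integral_congr_Ioo_of_le zero_le_one fun s hs ↦ ?_
  simp only [mul_rpow hu hs.1.le, mul_assoc]

end erdelyiKober

/-- The domain of integration of the Dirichlet density of two variables. -/
def unitTriangle : Set (ℝ × ℝ) := {p : ℝ × ℝ | 0 ≤ p.1 ∧ 0 ≤ p.2 ∧ p.1 + p.2 ≤ 1}

/-- The parametrization of `unitTriangle` by the unit square that collapses the side `t = 1` to the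
vertex `(1, 0)`; it splits the Dirichlet density into a product of two Beta densities. -/
def simplexShear (p : ℝ × ℝ) : ℝ × ℝ := (p.1, (1 - p.1) * p.2)

/-- The Fréchet derivative of `simplexShear`. -/
noncomputable def fderivSimplexShear (p : ℝ × ℝ) : ℝ × ℝ →L[ℝ] ℝ × ℝ :=
  (Matrix.toLin (.finTwoProd ℝ) (.finTwoProd ℝ) !![1, 0; -p.2, 1 - p.1]).toContinuousLinearMap

lemma hasFDerivAt_simplexShear (p : ℝ × ℝ) :
    HasFDerivAt simplexShear (fderivSimplexShear p) p := by
  unfold fderivSimplexShear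
  rw [Matrix.toLin_finTwoProd_toContinuousLinearMap]
  have h_fst : HasFDerivAt (fun q : ℝ × ℝ ↦ q.1) (ContinuousLinearMap.fst ℝ ℝ ℝ) p :=
    hasFDerivAt_fst
  convert! h_fst.prodMk ((h_fst.const_sub 1).mul hasFDerivAt_snd) using 2
  · simp
  · ext <;> simp

lemma det_fderivSimplexShear (p : ℝ × ℝ) : (fderivSimplexShear p).det = 1 - p.1 := by
  simp [fderivSimplexShear]

lemma injOn_simplexShear : InjOn simplexShear (Ico 0 1 ×ˢ Icc 0 1) := by
  rintro ⟨t, s⟩ ⟨ht, -⟩ ⟨t', s'⟩ - h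
  obtain ⟨rfl, h_snd⟩ := Prod.mk.inj h
  exact congrArg _ (mul_left_cancel₀ (sub_pos.2 ht.2).ne' h_snd)

lemma image_simplexShear :
    simplexShear '' (Ico 0 1 ×ˢ Icc 0 1) = unitTriangle \ {(1, 0)} := by
  ext ⟨x, y⟩
  constructor
  · rintro ⟨⟨t, s⟩, ⟨⟨ht₀, ht₁⟩, hs₀, hs₁⟩, h⟩
    obtain ⟨rfl, rfl⟩ := Prod.mk.inj h
    dsimp only at *
    exact ⟨⟨ht₀, mul_nonneg (sub_nonneg.2 ht₁.le) hs₀, by dsimp only; nlinarith⟩,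
      fun h' ↦ ht₁.ne (Prod.mk.inj h').1⟩
  · rintro ⟨⟨hx, hy, hxy⟩, h_ne⟩
    dsimp only at *
    have hx₁ : 0 < 1 - x := by
      refine lt_of_le_of_ne (by linarith) fun h ↦ h_ne ?_
      exact Prod.ext (by dsimp only; linarith) (by dsimp only; linarith)
    refine ⟨(x, y / (1 - x)), ⟨⟨hx, by linarith⟩, div_nonneg hy hx₁.le, ?_⟩, ?_⟩
    · exact (div_le_one hx₁).2 (by linarith)
    · exact Prod.ext rfl (mul_div_cancel₀ y hx₁.ne')

/-- The unnormalized density of the Dirichlet distribution on `unitTriangle` with parameters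
`a`, `b`, `c`. -/
noncomputable def dirichletKernel (a b c : ℝ) (p : ℝ × ℝ) : ℝ :=
  p.1 ^ (a - 1) * p.2 ^ (b - 1) * (1 - p.1 - p.2) ^ (c - 1)

lemma dirichletKernel_swap (a b c : ℝ) (p : ℝ × ℝ) :
    dirichletKernel a b c p.swap = dirichletKernel b a c p := by
  rw [dirichletKernel, dirichletKernel, Prod.fst_swap, Prod.snd_swap, sub_right_comm,
    mul_comm (p.2 ^ _)]

lemma one_sub_mul_dirichletKernel_simplexShear (a b c : ℝ) {p : ℝ × ℝ}
    (hp : p ∈ Ico (0 : ℝ) 1 ×ˢ Icc (0 : ℝ) 1) :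
    (1 - p.1) * dirichletKernel a b c (simplexShear p) =
      betaKernel a (b + c) p.1 * betaKernel b c p.2 := by
  obtain ⟨t, s⟩ := p
  have ht : 0 < 1 - t := sub_pos.2 hp.1.2
  have hs : s ∈ Icc (0 : ℝ) 1 := hp.2
  have h_exp : (1 - t) ^ (b + c - 1) = (1 - t) * (1 - t) ^ (b - 1) * (1 - t) ^ (c - 1) := by
    rw [show b + c - 1 = 1 + (b - 1) + (c - 1) by ring, rpow_add ht, rpow_add ht, rpow_one]
  simp only [dirichletKernel, simplexShear, betaKernel]
  rw [show 1 - t - (1 - t) * s = (1 - t) * (1 - s) by ring, mul_rpow ht.le hs.1,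
    mul_rpow ht.le (sub_nonneg.2 hs.2), h_exp]
  ring

/-- The integral of `f ⊗ g` against the unnormalized Dirichlet density. -/
noncomputable def dirichletIntegral (a b c : ℝ) (f g : ℝ → ℝ) : ℝ :=
  ∫ p in unitTriangle, f p.1 * g p.2 * dirichletKernel a b c p

section dirichletIntegral

variable {a b c : ℝ} {f g : ℝ → ℝ}

lemma dirichletIntegral_comm (a b c : ℝ) (f g : ℝ → ℝ) :
    dirichletIntegral a b c f g = dirichletIntegral b a c g f := by
  have h_swap : MeasurePreserving (Prod.swap : ℝ × ℝ → ℝ × ℝ) volume volume :=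
    Measure.measurePreserving_swap
  rw [dirichletIntegral, dirichletIntegral,
    ← h_swap.setIntegral_preimage_emb MeasurableEquiv.prodComm.measurableEmbedding]
  congr 2
  · ext p
    simp only [unitTriangle, mem_preimage, mem_ofPred_eq, Prod.fst_swap, Prod.snd_swap,
      add_comm p.2]
    tauto
  · ext p
    rw [dirichletKernel_swap, Prod.fst_swap, Prod.snd_swap, mul_comm (f p.2)]

lemma dirichletIntegral_eq_setIntegral_prod (a b c : ℝ) (f g : ℝ → ℝ) :
    dirichletIntegral a b c f g = ∫ p in Ioc (0 : ℝ) 1 ×ˢ Ioc (0 : ℝ) 1,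
      f p.1 * g ((1 - p.1) * p.2) * (betaKernel a (b + c) p.1 * betaKernel b c p.2) := by
  have h_meas : MeasurableSet (Ico (0 : ℝ) 1 ×ˢ Icc (0 : ℝ) 1) :=
    measurableSet_Ico.prod measurableSet_Icc
  have h_ae : (Ico (0 : ℝ) 1 ×ˢ Icc (0 : ℝ) 1 : Set (ℝ × ℝ)) =ᵐ[volume] Ioc 0 1 ×ˢ Ioc 0 1 :=
    Measure.set_prod_ae_eq Ico_ae_eq_Ioc Ioc_ae_eq_Icc.symm
  rw [dirichletIntegral, ← setIntegral_congr_set (sdiff_null_ae_eq_self (measure_singleton (1, 0))),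
    ← image_simplexShear, integral_image_eq_integral_abs_det_fderiv_smul volume h_meas
      (fun p _ ↦ (hasFDerivAt_simplexShear p).hasFDerivWithinAt) injOn_simplexShear,
    ← setIntegral_congr_set h_ae]
  refine setIntegral_congr_fun h_meas fun p hp ↦ ?_
  simp only [det_fderivSimplexShear, smul_eq_mul]
  rw [abs_of_pos (sub_pos.2 hp.1.2), ← one_sub_mul_dirichletKernel_simplexShear a b c hp,
    mul_left_comm]
  rfl

lemma integrableOn_mul_betaKernel_mul_betaKernel (ha : 0 < a) (hb : 0 < b) (hc : 0 < c)
    (hf : ContinuousOn f (Icc 0 1)) (hg : ContinuousOn g (Icc 0 1)) :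
    IntegrableOn (fun p : ℝ × ℝ ↦
      f p.1 * g ((1 - p.1) * p.2) * (betaKernel a (b + c) p.1 * betaKernel b c p.2))
      (Ioc 0 1 ×ˢ Ioc 0 1) := by
  have h_int {a b : ℝ} (ha : 0 < a) (hb : 0 < b) : IntegrableOn (betaKernel a b) (Ioc 0 1) :=
    (intervalIntegrable_iff_integrableOn_Ioc_of_le zero_le_one).1
      (intervalIntegrable_betaKernel ha hb)
  have h_prod : IntegrableOn (fun p : ℝ × ℝ ↦ betaKernel a (b + c) p.1 * betaKernel b c p.2)
      (Ioc 0 1 ×ˢ Ioc 0 1) := by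
    rw [IntegrableOn, Measure.volume_eq_prod, ← Measure.prod_restrict]
    exact (h_int ha (add_pos hb hc)).mul_prod (h_int hb hc)
  have h_cont : ContinuousOn (fun p : ℝ × ℝ ↦ f p.1 * g ((1 - p.1) * p.2))
      (Icc 0 1 ×ˢ Icc 0 1) :=
    (hf.comp continuousOn_fst fun _ hp ↦ hp.1).mul <| hg.comp (by fun_prop)
      fun _ hp ↦ unitInterval.mul_mem (Icc.mem_iff_one_sub_mem.1 hp.1) hp.2
  exact h_prod.continuousOn_mul_of_subset h_cont (isCompact_Icc.prod isCompact_Icc)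
    (measurableSet_Ioc.prod measurableSet_Ioc) (prod_mono Ioc_subset_Icc_self Ioc_subset_Icc_self)

lemma integral_mul_betaKernel_eq_mul_erdelyiKober (a b c : ℝ) (f g : ℝ → ℝ) (t : ℝ) :
    ∫ s in Ioc (0 : ℝ) 1,
      f t * g ((1 - t) * s) * (betaKernel a (b + c) t * betaKernel b c s) =
    f t * betaKernel a (b + c) t * erdelyiKober b c g (1 - t) := by
  rw [erdelyiKober, intervalIntegral.integral_of_le zero_le_one, ← integral_const_mul]
  simp only [mul_mul_mul_comm]

lemma integrableOn_mul_erdelyiKober (ha : 0 < a) (hb : 0 < b) (hc : 0 < c)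
    (hf : ContinuousOn f (Icc 0 1)) (hg : ContinuousOn g (Icc 0 1)) :
    IntegrableOn (fun t ↦ f t * betaKernel a (b + c) t * erdelyiKober b c g (1 - t))
      (Ioc 0 1) := by
  have h := integrableOn_mul_betaKernel_mul_betaKernel ha hb hc hf hg
  rw [IntegrableOn, Measure.volume_eq_prod, ← Measure.prod_restrict] at h
  have h_left := h.integral_prod_left
  simp only [integral_mul_betaKernel_eq_mul_erdelyiKober] at h_left
  exact h_left

lemma dirichletIntegral_eq_integral_mul_erdelyiKober (ha : 0 < a) (hb : 0 < b) (hc : 0 < c)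
    (hf : ContinuousOn f (Icc 0 1)) (hg : ContinuousOn g (Icc 0 1)) :
    dirichletIntegral a b c f g =
      ∫ t in Ioc (0 : ℝ) 1, f t * betaKernel a (b + c) t * erdelyiKober b c g (1 - t) := by
  rw [dirichletIntegral_eq_setIntegral_prod, Measure.volume_eq_prod,
    setIntegral_prod _ (integrableOn_mul_betaKernel_mul_betaKernel ha hb hc hf hg)]
  simp only [integral_mul_betaKernel_eq_mul_erdelyiKober]

lemma dirichletIntegral_rpow_rpow {α β : ℝ} (ha : 0 < a) (hb : 0 < b) (hc : 0 < c) (hα : 0 ≤ α)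
    (hβ : 0 ≤ β) :
    dirichletIntegral a b c (fun t ↦ t ^ α) (fun t ↦ t ^ β) =
      betaFn (a + α) (b + c + β) * betaFn (b + β) c := by
  have h_integrand {t : ℝ} (ht : t ∈ Ioo (0 : ℝ) 1) :
      t ^ α * betaKernel a (b + c) t * erdelyiKober b c (fun s ↦ s ^ β) (1 - t) =
        betaKernel (a + α) (b + c + β) t * betaFn (b + β) c := by
    rw [erdelyiKober_rpow (by positivity) hc (sub_nonneg.2 ht.2.le), rpow_mul_betaKernel α ht.1,
      ← one_sub_rpow_mul_betaKernel β ht.2]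
    ring
  rw [dirichletIntegral_eq_integral_mul_erdelyiKober ha hb hc
      (continuous_rpow_const hα).continuousOn
      (continuous_rpow_const hβ).continuousOn,
    ← intervalIntegral.integral_of_le zero_le_one,
    intervalIntegral.integral_congr_Ioo_of_le zero_le_one fun _ ↦ h_integrand,
    intervalIntegral.integral_mul_const, integral_betaKernel (by positivity) (by positivity)]

lemma dirichletIntegral_mul_integral_le {k : ℝ → ℝ} (ha : 0 < a) (hb : 0 < b) (hc : 0 < c)
    (hf : ContinuousOn f (Icc 0 1)) (hg : ContinuousOn g (Icc 0 1))
    (hk : ContinuousOn k (Icc 0 1)) (hk_mono : MonotoneOn k (Icc 0 1))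
    (h_ratio : ∀ x ∈ Ioc (0 : ℝ) 1, ∀ y ∈ Ioc (0 : ℝ) 1, x ≤ y → f x * g y ≤ f y * g x) :
    dirichletIntegral a b c f k * ∫ t in (0 : ℝ)..1, g t * betaKernel a (b + c) t ≤
      (∫ t in (0 : ℝ)..1, f t * betaKernel a (b + c) t) * dirichletIntegral a b c g k := by
  have h_int {f : ℝ → ℝ} (hf : ContinuousOn f (Icc 0 1)) :
      IntegrableOn (fun t ↦ f t * betaKernel a (b + c) t) (Ioc 0 1) :=
    (intervalIntegrable_iff_integrableOn_Ioc_of_le zero_le_one).1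
      (intervalIntegrable_mul_betaKernel ha (add_pos hb hc) hf)
  -- Integrating out the second coordinate leaves a decreasing weight on the first.
  have h_anti : AntitoneOn (fun t ↦ erdelyiKober b c k (1 - t)) (Ioc 0 1) :=
    fun x hx y hy hxy ↦ monotoneOn_erdelyiKober hb hc hk hk_mono
      (Icc.mem_iff_one_sub_mem.1 (Ioc_subset_Icc_self hy))
      (Icc.mem_iff_one_sub_mem.1 (Ioc_subset_Icc_self hx)) (sub_le_sub_left hxy 1)
  rw [dirichletIntegral_eq_integral_mul_erdelyiKober ha hb hc hf hk,
    dirichletIntegral_eq_integral_mul_erdelyiKober ha hb hc hg hk,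
    intervalIntegral.integral_of_le zero_le_one, intervalIntegral.integral_of_le zero_le_one]
  refine setIntegral_mul_mul_setIntegral_le_of_antitoneOn measurableSet_Ioc (h_int hf) (h_int hg)
    (integrableOn_mul_erdelyiKober ha hb hc hf hk) (integrableOn_mul_erdelyiKober ha hb hc hg hk)
    (fun x hx y hy hxy ↦ ?_) h_anti
  rw [mul_mul_mul_comm, mul_mul_mul_comm (f y), mul_comm (betaKernel a (b + c) y)]
  exact mul_le_mul_of_nonneg_right (h_ratio x hx y hy hxy)
    (mul_nonneg (betaKernel_nonneg (Ioc_subset_Icc_self hx))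
      (betaKernel_nonneg (Ioc_subset_Icc_self hy)))

lemma dirichletIntegral_regIncBeta_rpow_le {m : ℝ} (ha : 0 < a) (hb : 0 < b) (hc : 0 < c)
    (hbc : b + c ≤ 1) (hm : 0 ≤ m) (hg : ContinuousOn g (Icc 0 1))
    (hg_mono : MonotoneOn g (Icc 0 1)) :
    dirichletIntegral a b c (fun t ↦ regIncBeta t a (b + c) ^ m) g ≤
      betaFn a (b + c) / (m + 1) / betaFn (a + a * m) (b + c) *
        dirichletIntegral a b c (fun t ↦ t ^ (a * m)) g := by
  have hbc₀ : 0 < b + c := add_pos hb hc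
  have ham : 0 ≤ a * m := mul_nonneg ha.le hm
  have h := dirichletIntegral_mul_integral_le ha hb hc
    (continuousOn_regIncBeta_rpow ha hbc₀ hm)
    (continuous_rpow_const ham).continuousOn hg hg_mono
    fun x hx y hy hxy ↦ regIncBeta_rpow_mul_rpow_le ha hbc₀ hbc hm hx.1 hxy hy.2
  rw [integral_regIncBeta_rpow_mul_betaKernel ha hbc₀ hm] at h
  rw [integral_rpow_mul_betaKernel (by positivity) hbc₀] at h
  rw [div_mul_eq_mul_div]
  exact (le_div_iff₀ (betaFn_pos (by positivity) hbc₀)).2 h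

lemma dirichletIntegral_regIncBeta_rpow_rpow_le {m n : ℝ} (ha : 0 < a) (hb : 0 < b) (hc : 0 < c)
    (hbc : b + c ≤ 1) (hac : a + c ≤ 1) (hm : 0 ≤ m) (hn : 0 ≤ n) :
    dirichletIntegral a b c (fun t ↦ regIncBeta t a (b + c) ^ m)
        (fun t ↦ regIncBeta t b (a + c) ^ n) ≤
      betaFn a (b + c) / (m + 1) / betaFn (a + a * m) (b + c) *
        (betaFn b (a + c) / (n + 1) / betaFn (b + b * n) (a + c) *
          (betaFn (a + a * m) (b + c + b * n) * betaFn (b + b * n) c)) := by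
  have ham : 0 ≤ a * m := mul_nonneg ha.le hm
  have hbn : 0 ≤ b * n := mul_nonneg hb.le hn
  have h_second := dirichletIntegral_regIncBeta_rpow_le hb ha hc hac hn
    (continuous_rpow_const ham).continuousOn
    fun x hx y _ hxy ↦ rpow_le_rpow hx.1 hxy ham
  rw [dirichletIntegral_comm b a, dirichletIntegral_comm b a,
    dirichletIntegral_rpow_rpow ha hb hc ham hbn] at h_second
  refine (dirichletIntegral_regIncBeta_rpow_le ha hb hc hbc hm
    (continuousOn_regIncBeta_rpow hb (add_pos ha hc) hn)
    (monotoneOn_regIncBeta_rpow hb (add_pos ha hc) hn)).trans ?_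
  refine mul_le_mul_of_nonneg_left h_second ?_
  have hB := betaFn_pos ha (add_pos hb hc)
  have hB' := betaFn_pos (add_pos_of_pos_of_nonneg ha ham) (add_pos hb hc)
  positivity

lemma dirichletIntegral_regIncBeta_rpow_rpow_le_mvBeta {m n : ℝ} (ha : 0 < a) (hb : 0 < b)
    (hc : 0 < c) (habc : a + b + c = 1) (hm : 0 ≤ m) (hn : 0 ≤ n) :
    dirichletIntegral a b c (fun t ↦ regIncBeta t a (b + c) ^ m)
        (fun t ↦ regIncBeta t b (a + c) ^ n) ≤
      mvBeta a b c / ((m + 1) * (n + 1)) * (genBinom (a * m + b * n) (a * m))⁻¹ := by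
  refine (dirichletIntegral_regIncBeta_rpow_rpow_le ha hb hc (by linarith) (by linarith)
    hm hn).trans_eq ?_
  rw [betaFn, betaFn, betaFn, betaFn, betaFn, betaFn, mvBeta, genBinom,
    show a + a * m + (b + c) = a * m + 1 by linarith,
    show b + b * n + (a + c) = b * n + 1 by linarith,
    show a + a * m + (b + c + b * n) = a * m + b * n + 1 by linarith,
    show b + b * n + c = b + c + b * n by ring,
    show a * m + b * n - a * m + 1 = b * n + 1 by ring,
    show a + (b + c) = a + b + c by ring, show b + (a + c) = a + b + c by ring, habc, Gamma_one]
  have hΓ {x : ℝ} (hx : 0 < x) : Gamma x ≠ 0 := (Gamma_pos_of_pos hx).ne'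
  have hΓbc := hΓ (add_pos hb hc)
  have hΓac := hΓ (add_pos ha hc)
  have hΓbcn : Gamma (b + c + b * n) ≠ 0 := hΓ (by positivity)
  have hΓbn : Gamma (b * n + 1) ≠ 0 := hΓ (by positivity)
  field_simp

end dirichletIntegral

lemma mvBeta_pos {a b c : ℝ} (ha : 0 < a) (hb : 0 < b) (hc : 0 < c) : 0 < mvBeta a b c :=
  div_pos (mul_pos (mul_pos (Gamma_pos_of_pos ha) (Gamma_pos_of_pos hb)) (Gamma_pos_of_pos hc))
    (Gamma_pos_of_pos (by positivity))

lemma psi_eq_dirichletIntegral (x₁ x₂ ρ₁ ρ₂ : ℝ) :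
    Psi x₁ x₂ ρ₁ ρ₂ = (x₁ * x₂)⁻¹ * (mvBeta ρ₁ ρ₂ (1 - ρ₁ - ρ₂))⁻¹ *
      dirichletIntegral ρ₁ ρ₂ (1 - ρ₁ - ρ₂)
        (fun t ↦ regIncBeta t ρ₁ (ρ₂ + (1 - ρ₁ - ρ₂)) ^ (1 / x₁ - 1))
        (fun t ↦ regIncBeta t ρ₂ (ρ₁ + (1 - ρ₁ - ρ₂)) ^ (1 / x₂ - 1)) := by
  simp only [Psi, dirichletIntegral, dirichletKernel, ← mul_assoc]
  rw [show ρ₂ + (1 - ρ₁ - ρ₂) = 1 - ρ₁ by ring,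
    show ρ₁ + (1 - ρ₁ - ρ₂) = 1 - ρ₂ by ring, show 1 - ρ₁ - ρ₂ - 1 = -ρ₁ - ρ₂ by ring]
  rfl

theorem psi_le_inv_genBinom (x₁ x₂ ρ₁ ρ₂ : ℝ)
    (hx₁ : x₁ ∈ Set.Ioc (0:ℝ) 1) (hx₂ : x₂ ∈ Set.Ioc (0:ℝ) 1)
    (hρ₁ : ρ₁ ∈ Set.Ioo (0:ℝ) 1) (hρ₂ : ρ₂ ∈ Set.Ioo (0:ℝ) 1)
    (hsum : ρ₁ + ρ₂ < 1) :
    Psi x₁ x₂ ρ₁ ρ₂ ≤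
      (genBinom (ρ₁ * (1 / x₁ - 1) + ρ₂ * (1 / x₂ - 1)) (ρ₁ * (1 / x₁ - 1)))⁻¹ := by
  have hρ₀ : 0 < 1 - ρ₁ - ρ₂ := by linarith
  have hB := mvBeta_pos hρ₁.1 hρ₂.1 hρ₀
  have hx : 0 < x₁ * x₂ := mul_pos hx₁.1 hx₂.1
  have h_dirichlet := dirichletIntegral_regIncBeta_rpow_rpow_le_mvBeta hρ₁.1 hρ₂.1 hρ₀ (by ring)
    (sub_nonneg.2 (one_le_one_div hx₁.1 hx₁.2)) (sub_nonneg.2 (one_le_one_div hx₂.1 hx₂.2))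
  rw [sub_add_cancel, sub_add_cancel, one_div_mul_one_div, div_div_eq_mul_div, div_one]
    at h_dirichlet
  rw [psi_eq_dirichletIntegral, ← mul_inv, inv_mul_le_iff₀ (mul_pos hx hB),
    mul_comm (x₁ * x₂)]
  exact h_dirichlet
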